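/- Let R be a ring with total quotient ring T = Tot(R). Then R + XT[X] (the subring of T[X] of polynomials with constant term in R) is a semihereditary ring if and only if R is semihereditary and T is absolutely flat (von Neumann regular). -/

import Mathlib

/-- A semihereditary ring: every finitely generated ideal is projective. -/
def IsSemihereditary (R : Type*) [CommRing R] : Prop :=
  ∀ I : Ideal R, I.FG → Module.Projective R I

/-!
A finitely generated ideal is projective once every principal ideal is projective and every
two-generated ideal is locally principal. The second condition makes sense for an `R`-module `M`:
for all `x y : M` the ideals `(Ry : x)` and `(Rx : y)` are comaximal.

Let `A = R + X T[X]`. Applying this condition in `A` to the pairs `(α X, β X)` and `(t X, X ^ 2)`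
and comparing coefficients shows that the `R`-module `T` satisfies it too, and that `t ∈ t² T`.
Conversely, if `T` is absolutely flat, then splitting along the idempotents generated by leading
coefficients turns the Euclidean algorithm into a proof that any `f, g : T[X]` can be written
`f = d f'`, `g = d g'` with `f'` and `g'` comaximal, and the condition on `T` allows the Bézout
coefficients of `f'` and `g'` to be corrected so that the relations between `f` and `g` lie in `A`.

If `T` is the total quotient ring of `R`, then absolute flatness of `T` together with the condition
on the `R`-module `T` amounts to `R` being semihereditary.
-/

open Polynomial TensorProduct

section Criterion

variable {R M : Type*} [CommRing R] [AddCommGroup M] [Module R M]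

/-- `e` is the support of `a`: an idempotent with the same annihilator as `a`. Idempotence is not
part of the definition but follows from it, see `IsIdempotentSupport.isIdempotentElem`. -/
def IsIdempotentSupport (e : R) (a : M) : Prop :=
  e • a = a ∧ ∀ r : R, r • a = 0 → r * e = 0

theorem IsIdempotentSupport.isIdempotentElem {e : R} {a : M} (h : IsIdempotentSupport e a) :
    IsIdempotentElem e := by
  have h_compl : (1 - e) * e = 0 := h.2 _ (by rw [sub_smul, one_smul, h.1, sub_self])
  rw [IsIdempotentElem]
  linear_combination -h_compl

theorem IsIdempotentSupport.of_map {S : Type*} [CommRing S] {φ : R →+* S}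
    (hφ : Function.Injective φ) {e a : R} (h : IsIdempotentSupport (φ e) (φ a)) :
    IsIdempotentSupport e a := by
  simp only [IsIdempotentSupport, smul_eq_mul] at h ⊢
  refine ⟨hφ (by rw [map_mul, h.1]), fun r hr ↦ hφ ?_⟩
  rw [map_mul, map_zero, h.2 (φ r) (by rw [← map_mul, hr, map_zero])]

variable (R M) in
/-- Every cyclic submodule is projective. For `M = R` these are the p.p. rings. -/
def HasIdempotentSupports : Prop :=
  ∀ a : M, ∃ e : R, IsIdempotentSupport e a

variable (R M) in
/-- The submodule generated by any two elements is locally cyclic, in the form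
`(Ry : x) + (Rx : y) = R`. For `M = R` these are the arithmetical rings. -/
def IsArithmeticalModule : Prop :=
  ∀ x y : M, ∃ u v w : R, u • x = v • y ∧ (1 - u) • y = w • x

theorem exists_isIdempotentSupport_of_projective (a : M) [Module.Projective R (R ∙ a)] :
    ∃ e : R, IsIdempotentSupport e a := by
  let gen : R ∙ a := ⟨a, Submodule.mem_span_singleton_self a⟩
  have h_surj : Function.Surjective (LinearMap.toSpanSingleton R (R ∙ a) gen) := by
    rintro ⟨x, hx⟩
    obtain ⟨c, rfl⟩ := Submodule.mem_span_singleton.1 hx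
    exact ⟨c, rfl⟩
  obtain ⟨s, hs⟩ := Module.projective_lifting_property _ LinearMap.id h_surj
  refine ⟨s gen, congrArg Subtype.val (LinearMap.congr_fun hs gen), fun r hr ↦ ?_⟩
  have h_gen : r • gen = 0 := Subtype.ext hr
  rw [← smul_eq_mul, ← map_smul, h_gen, map_zero]

theorem exists_mul_eq_mul_of_projective (a b : R) [Module.Projective R (Ideal.span {a, b})] :
    ∃ u v w : R, u * a = v * b ∧ (1 - u) * b = w * a := by
  let a' : Ideal.span {a, b} := ⟨a, Ideal.subset_span (by simp)⟩
  let b' : Ideal.span {a, b} := ⟨b, Ideal.subset_span (by simp)⟩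
  let g : R × R →ₗ[R] Ideal.span {a, b} :=
    (LinearMap.toSpanSingleton R _ a').coprod (LinearMap.toSpanSingleton R _ b')
  have h_surj : Function.Surjective g := by
    rintro ⟨x, hx⟩
    obtain ⟨c, d, rfl⟩ := Ideal.mem_span_pair.1 hx
    exact ⟨(c, d), rfl⟩
  obtain ⟨s, hs⟩ := Module.projective_lifting_property g LinearMap.id h_surj
  have hb : (s b').1 * a + (s b').2 * b = b :=
    congrArg Subtype.val (LinearMap.congr_fun hs b')
  have h_smul : a • s b' = b • s a' := by
    rw [← map_smul, ← map_smul]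
    exact congrArg s (Subtype.ext (mul_comm a b))
  have h_snd : a * (s b').2 = b * (s a').2 := congrArg Prod.snd h_smul
  exact ⟨(s b').2, (s a').2, (s b').1, by linear_combination h_snd, by linear_combination -hb⟩

theorem IsArithmeticalModule.span_multipliers_eq_top (h : IsArithmeticalModule R M)
    {N : Submodule R M} (hN : N.FG) :
    Ideal.span {s : R | ∃ a ∈ N, ∀ x ∈ N, s • x ∈ R ∙ a} = ⊤ := by
  induction N, hN using Submodule.fg_induction with
  | singleton x =>
    exact (Ideal.eq_top_iff_one _).2 (Ideal.subset_span
      ⟨x, Submodule.mem_span_singleton_self x, fun y hy ↦ Submodule.smul_mem _ _ hy⟩)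
  | sup N₁ N₂ _ _ h₁ h₂ =>
    rw [eq_top_iff, ← Ideal.top_mul ⊤]
    nth_rewrite 1 [← h₁]
    rw [← h₂, Ideal.span_mul_span', Ideal.span_le]
    rintro _ ⟨s, ⟨a, ha, hs⟩, t, ⟨b, hb, ht⟩, rfl⟩
    obtain ⟨u, v, w, huv, huw⟩ := h a b
    have h_split : s * t = s * t * u + s * t * (1 - u) := by ring
    simp only [SetLike.mem_coe]
    rw [h_split]
    refine add_mem (Ideal.subset_span ⟨b, Submodule.mem_sup_right hb, fun x hx ↦ ?_⟩)
      (Ideal.subset_span ⟨a, Submodule.mem_sup_left ha, fun x hx ↦ ?_⟩)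
    all_goals
      obtain ⟨y, hy, z, hz, rfl⟩ := Submodule.mem_sup.1 hx
      obtain ⟨c, hc⟩ := Submodule.mem_span_singleton.1 (hs y hy)
      obtain ⟨d, hd⟩ := Submodule.mem_span_singleton.1 (ht z hz)
      rw [Submodule.mem_span_singleton]
    · exact ⟨t * c * v + s * u * d, by
        linear_combination (norm := module) (t * u) • hc + (s * u) • hd - (t * c) • huv⟩
    · exact ⟨t * (1 - u) * c + s * d * w, by
        linear_combination (norm := module) (t * (1 - u)) • hc + (s * (1 - u)) • hd - (s * d) • huw⟩

theorem IsIdempotentSupport.exists_linearMap_smul_eq {e s : R} {a : M}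
    (h : IsIdempotentSupport e a) {N : Submodule R M} (hs : ∀ x ∈ N, s • x ∈ R ∙ a) :
    ∃ φ : N →ₗ[R] R, ∀ x : N, φ x • a = s • (x : M) := by
  choose c hc using fun x : N ↦ Submodule.mem_span_singleton.1 (hs x x.2)
  have h_cancel : ∀ y z : R, y • a = z • a → y * e = z * e := fun y z hyz ↦ by
    linear_combination h.2 (y - z) (by rw [sub_smul, hyz, sub_self])
  refine ⟨{ toFun := fun x ↦ c x * e, map_add' := fun x y ↦ ?_, map_smul' := fun r x ↦ ?_ },
    fun x ↦ ?_⟩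
  · rw [← add_mul]
    apply h_cancel
    rw [add_smul, hc, hc, hc, Submodule.coe_add, smul_add]
  · rw [RingHom.id_apply, smul_eq_mul, ← mul_assoc]
    apply h_cancel
    rw [mul_smul, hc, hc, Submodule.coe_smul, smul_comm]
  · simp only [LinearMap.coe_mk, AddHom.coe_mk]
    rw [mul_smul, h.1, hc]

theorem IsArithmeticalModule.projective_of_fg (h : IsArithmeticalModule R M)
    (hM : HasIdempotentSupports R M) {N : Submodule R M} (hN : N.FG) :
    Module.Projective R N := by
  -- `r ∈ I` iff multiplication by `r` on `N` factors through a finite free module.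
  let I : Ideal R := (LinearMap.range (dualTensorHom R N N)).comap
    (LinearMap.toSpanSingleton R (N →ₗ[R] N) 1)
  have h_le : Ideal.span {s : R | ∃ a ∈ N, ∀ x ∈ N, s • x ∈ R ∙ a} ≤ I := by
    rw [Ideal.span_le]
    rintro s ⟨a, ha, hs⟩
    obtain ⟨e, he⟩ := hM a
    obtain ⟨φ, hφ⟩ := he.exists_linearMap_smul_eq hs
    exact ⟨φ ⊗ₜ ⟨a, ha⟩, LinearMap.ext fun x ↦ Subtype.ext (hφ x)⟩
  have h_one : (1 : R) ∈ I := h_le (by rw [h.span_multipliers_eq_top hN]; trivial)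
  obtain ⟨t, ht⟩ := h_one
  exact .of_one_mem_range_dualTensorHom ⟨t, by simpa using ht⟩

theorem isSemihereditary_iff :
    IsSemihereditary R ↔ HasIdempotentSupports R R ∧ IsArithmeticalModule R R := by
  refine ⟨fun h ↦ ⟨fun a ↦ ?_, fun a b ↦ ?_⟩, fun h I hI ↦ h.2.projective_of_fg h.1 hI⟩
  · have := h (R ∙ a) (Submodule.fg_span_singleton a)
    exact exists_isIdempotentSupport_of_projective a
  · have := h (Ideal.span {a, b}) (Submodule.fg_span (Set.toFinite _))
    exact exists_mul_eq_mul_of_projective a b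

theorem IsArithmeticalModule.of_injective {N : Type*} [AddCommGroup N] [Module R N]
    (h : IsArithmeticalModule R N) {f : M →ₗ[R] N} (hf : Function.Injective f) :
    IsArithmeticalModule R M := by
  intro x y
  obtain ⟨u, v, w, huv, huw⟩ := h (f x) (f y)
  exact ⟨u, v, w, hf (by rw [map_smul, map_smul, huv]), hf (by rw [map_smul, map_smul, huw])⟩

theorem IsArithmeticalModule.of_isLocalizedModule {M' : Type*} [AddCommGroup M'] [Module R M']
    (S : Submonoid R) (f : M →ₗ[R] M') [IsLocalizedModule S f] (h : IsArithmeticalModule R M) :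
    IsArithmeticalModule R M' := by
  intro x y
  obtain ⟨c, hc⟩ := IsLocalizedModule.exist_integer_multiples_of_finite S f ![x, y]
  obtain ⟨a, ha⟩ := hc 0
  obtain ⟨b, hb⟩ := hc 1
  obtain ⟨u, v, w, huv, huw⟩ := h a b
  simp only [Matrix.cons_val_zero, Matrix.cons_val_one] at ha hb
  refine ⟨u, v, w, IsLocalizedModule.smul_injective f c ?_,
    IsLocalizedModule.smul_injective f c ?_⟩ <;> simp only [Submonoid.smul_def]
  · rw [smul_comm, smul_comm _ v, ← ha, ← hb, ← map_smul, ← map_smul, huv]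
  · rw [smul_comm, smul_comm _ w, ← ha, ← hb, ← map_smul, ← map_smul, huw]

theorem IsArithmeticalModule.mem_range_algebraMap_of_isIdempotentElem {T : Type*} [CommRing T]
    [Algebra R T] (h : IsArithmeticalModule R T) {e : T} (he : IsIdempotentElem e) :
    e ∈ (algebraMap R T).range := by
  obtain ⟨u, v, w, huv, huw⟩ := h 1 e
  simp only [Algebra.smul_def, map_sub, map_one, mul_one] at huv huw
  refine ⟨w + u, ?_⟩
  rw [IsIdempotentElem] at he
  rw [map_add]
  linear_combination -huw + (1 - e) * huv - algebraMap R T v * he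

end Criterion

section Polynomial

variable {T : Type*} [CommRing T]

/-- Absolutely flat, that is, von Neumann regular, rings, in their elementwise description. -/
def IsAbsolutelyFlat (T : Type*) [CommRing T] : Prop :=
  ∀ t : T, ∃ u : T, t = t * t * u

theorem isIdempotentSupport_mul_of_eq_mul_mul {t u : T} (h : t = t * t * u) :
    IsIdempotentSupport (t * u) t := by
  simp only [IsIdempotentSupport, smul_eq_mul]
  exact ⟨by linear_combination -h, fun r hr ↦ by linear_combination u * hr⟩

/-- `f` and `g` have a common divisor with comaximal cofactors. Rings in which all pairs have this
property are the Hermite rings in the sense of Kaplansky. -/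
def HasCoprimeCofactors (f g : T) : Prop :=
  ∃ d f' g' : T, f = d * f' ∧ g = d * g' ∧ IsCoprime f' g'

theorem hasCoprimeCofactors_zero_right (f : T) : HasCoprimeCofactors f 0 :=
  ⟨f, 1, 0, (mul_one f).symm, (mul_zero f).symm, isCoprime_one_left⟩

theorem HasCoprimeCofactors.symm {f g : T} (h : HasCoprimeCofactors f g) :
    HasCoprimeCofactors g f := by
  obtain ⟨d, f', g', hf, hg, h⟩ := h
  exact ⟨d, g', f', hg, hf, h.symm⟩

theorem HasCoprimeCofactors.of_sub_mul {f g : T} (h : T)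
    (H : HasCoprimeCofactors (f - h * g) g) : HasCoprimeCofactors f g := by
  obtain ⟨d, f', g', hf, hg, H⟩ := H
  exact ⟨d, f' + h * g', g', by linear_combination hf + h * hg, hg, H.add_mul_right_left h⟩

theorem HasCoprimeCofactors.of_isIdempotentElem {f g e : T} (he : IsIdempotentElem e)
    (h₁ : HasCoprimeCofactors (e * f) (e * g))
    (h₂ : HasCoprimeCofactors ((1 - e) * f) ((1 - e) * g)) : HasCoprimeCofactors f g := by
  obtain ⟨d₁, f₁, g₁, hf₁, hg₁, p₁, q₁, h₁⟩ := h₁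
  obtain ⟨d₂, f₂, g₂, hf₂, hg₂, p₂, q₂, h₂⟩ := h₂
  rw [IsIdempotentElem] at he
  refine ⟨e * d₁ + (1 - e) * d₂, e * f₁ + (1 - e) * f₂, e * g₁ + (1 - e) * g₂, ?_, ?_,
    e * p₁ + (1 - e) * p₂, e * q₁ + (1 - e) * q₂, ?_⟩
  · linear_combination e * hf₁ + (1 - e) * hf₂ +
      (-2 * f + d₁ * f₂ + d₂ * f₁ - d₁ * f₁ - d₂ * f₂) * he
  · linear_combination e * hg₁ + (1 - e) * hg₂ +
      (-2 * g + d₁ * g₂ + d₂ * g₁ - d₁ * g₁ - d₂ * g₂) * he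
  · linear_combination e * h₁ + (1 - e) * h₂ +
      ((f₁ - f₂) * (p₁ - p₂) + (g₁ - g₂) * (q₁ - q₂)) * he

/-- The monic polynomial `m` is `f` divided by its coefficient at `X ^ n` on the component of `T`
where this coefficient is invertible, and `X ^ n` on the complementary one. -/
theorem IsAbsolutelyFlat.exists_monic_C_mul_eq (hT : IsAbsolutelyFlat T) {n : ℕ} {f : T[X]}
    (hf : f.degree < (n + 1 : ℕ)) :
    ∃ (e u : T) (m : T[X]), IsIdempotentElem e ∧ m.Monic ∧ m.degree ≤ n ∧
      C e * m = C u * f ∧ (C (1 - e) * f).degree < n := by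
  obtain ⟨c, hc⟩ := hT (f.coeff n)
  have he := (isIdempotentSupport_mul_of_eq_mul_mul hc).isIdempotentElem
  set e := f.coeff n * c
  have h_deg : (C c * f + C (1 - e) * X ^ n).degree ≤ (n : WithBot ℕ) := by
    rw [degree_lt_iff_coeff_zero] at hf
    rw [degree_le_iff_coeff_zero]
    intro k hk
    have hk : n < k := by exact_mod_cast hk
    rw [coeff_add, coeff_C_mul, coeff_C_mul, coeff_X_pow, hf k hk, if_neg hk.ne', mul_zero,
      mul_zero, add_zero]
  refine ⟨e, e * c, C c * f + C (1 - e) * X ^ n, he, ?_, h_deg, ?_, ?_⟩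
  · refine monic_of_degree_le n h_deg ?_
    simp only [coeff_add, coeff_C_mul, coeff_X_pow, if_true]
    ring
  · have hC : (C e * C e : T[X]) = C e := by rw [← C_mul, he.eq]
    simp only [C_mul, C_sub, C_1]
    linear_combination -X ^ n * hC
  · rw [degree_lt_iff_coeff_zero] at hf ⊢
    intro k hk
    rw [coeff_C_mul]
    obtain rfl | hk := eq_or_lt_of_le hk
    · linear_combination hc
    · rw [hf k hk, mul_zero]

theorem IsAbsolutelyFlat.hasCoprimeCofactors (hT : IsAbsolutelyFlat T) (f g : T[X]) :
    HasCoprimeCofactors f g := by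
  cases subsingleton_or_nontrivial T
  · simpa [Subsingleton.elim g 0] using hasCoprimeCofactors_zero_right f
  suffices h : ∀ (n : ℕ) (g : T[X]), g.degree < n → ∀ f, HasCoprimeCofactors f g from
    h (g.natDegree + 1) g (degree_le_natDegree.trans_lt (by norm_cast; lia)) f
  intro n
  induction n with
  | zero =>
    intro g hg f
    obtain rfl : g = 0 := by simpa using hg
    exact hasCoprimeCofactors_zero_right f
  | succ n ih =>
    intro g hg f
    obtain ⟨e, u, m, he, hm, hmn, hem, h_lower⟩ := hT.exists_monic_C_mul_eq hg
    have hC : IsIdempotentElem (C e) := he.map C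
    refine .of_isIdempotentElem hC ?_ ?_
    · have h_rem : C e * f - C u * (f /ₘ m) * (C e * g) = C e * (f %ₘ m) := by
        linear_combination -C e * modByMonic_add_div f m + C e * (f /ₘ m) * hem -
          m * (f /ₘ m) * hC.eq
      refine .of_sub_mul (C u * (f /ₘ m)) (.symm ?_)
      rw [h_rem]
      have h_deg : (f %ₘ m).degree < n := (degree_modByMonic_lt f hm).trans_le hmn
      refine ih _ ?_ _
      rw [degree_lt_iff_coeff_zero] at h_deg ⊢
      exact fun k hk ↦ by rw [coeff_C_mul, h_deg k hk, mul_zero]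
    · rw [← C_1, ← C_sub]
      exact ih _ h_lower _

theorem IsAbsolutelyFlat.exists_isIdempotentSupport_C (hT : IsAbsolutelyFlat T) (f : T[X]) :
    ∃ e : T, IsIdempotentSupport (C e) f := by
  suffices h : ∀ (n : ℕ) (f : T[X]), f.degree < n → ∃ e : T, IsIdempotentSupport (C e) f from
    h (f.natDegree + 1) f (degree_le_natDegree.trans_lt (by norm_cast; lia))
  intro n
  induction n with
  | zero =>
    intro f hf
    obtain rfl : f = 0 := by simpa using hf
    exact ⟨0, by simp [IsIdempotentSupport]⟩
  | succ n ih =>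
    intro f hf
    obtain ⟨e, u, m, -, hm, -, hem, h_lower⟩ := hT.exists_monic_C_mul_eq hf
    obtain ⟨e', hfe', he'⟩ := ih _ h_lower
    simp only [smul_eq_mul, C_sub, C_1] at hfe' he'
    refine ⟨e + (1 - e) * e', ?_, fun r (hr : r * f = 0) ↦ ?_⟩ <;>
      simp only [smul_eq_mul, C_add, C_sub, C_mul, C_1]
    · linear_combination hfe'
    · have h_lead : r * C e = 0 :=
        hm.isRegular.right.mul_right_eq_zero_iff.1 (by linear_combination r * hem + C u * hr)
      have h_rest : r * C e' = 0 := he' r (by linear_combination (1 - C e) * hr)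
      linear_combination h_lead + (1 - C e) * h_rest

end Polynomial

section Bezout

theorem exists_lift_bezout_of_isCoprime {A B : Type*} [CommRing A] [CommRing B] {φ : A →+* B}
    (hφ : Function.Surjective φ) {f g : A} (h : IsCoprime f g) {y z : B}
    (hyz : y * φ f + z * φ g = 1) :
    ∃ y' z' : A, y' * f + z' * g = 1 ∧ φ y' = y ∧ φ z' = z := by
  obtain ⟨p, q, hpq⟩ := h
  have hpq' : φ p * φ f + φ q * φ g = 1 := by rw [← map_mul, ← map_mul, ← map_add, hpq, map_one]
  obtain ⟨k, hk⟩ := hφ (φ p * z - φ q * y)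
  refine ⟨p - k * g, q + k * f, by linear_combination hpq, ?_, ?_⟩
  · rw [map_sub, map_mul, hk]
    linear_combination y * hpq' - φ p * hyz
  · rw [map_add, map_mul, hk]
    linear_combination z * hpq' - φ q * hyz

variable {R T : Type*} [CommRing R] [CommRing T] [Algebra R T]

theorem IsArithmeticalModule.exists_bezout_mem_range (h : IsArithmeticalModule R T) {α β : T}
    (hαβ : IsCoprime α β) :
    ∃ y z : T, y * α + z * β = 1 ∧ z * β ∈ (algebraMap R T).range ∧
      z * α ∈ (algebraMap R T).range ∧ y * β ∈ (algebraMap R T).range := by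
  obtain ⟨p, q, hpq⟩ := hαβ
  obtain ⟨u, v, w, huv, huw⟩ := h α β
  simp only [Algebra.smul_def, map_sub, map_one] at huv huw
  set u' := algebraMap R T u
  set v' := algebraMap R T v
  set w' := algebraMap R T w
  have hu : (v' * p + u' * q) * β = u' := by linear_combination u' * hpq - p * huv
  have hv : (v' * p + u' * q) * α = v' := by linear_combination v' * hpq + q * huv
  have hw : ((1 - u') * p + w' * q) * β = w' := by linear_combination w' * hpq + p * huw
  exact ⟨(1 - u') * p + w' * q, v' * p + u' * q,
    by linear_combination (1 - u') * hpq - q * huw + hu,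
    ⟨u, hu.symm⟩, ⟨v, hv.symm⟩, ⟨w, hw.symm⟩⟩

end Bezout

section ConstantTermSubring

variable {R T : Type*} [CommRing R] [CommRing T] [Algebra R T]

variable (R T) in
/-- The ring `R + X T[X]` of polynomials over `T` with constant term in (the image of) `R`. -/
noncomputable abbrev constantTermSubring : Subring T[X] :=
  Subring.comap constantCoeff (algebraMap R T).range

theorem IsArithmeticalModule.of_constantTermSubring
    (h : IsArithmeticalModule (constantTermSubring R T) (constantTermSubring R T)) :
    IsArithmeticalModule R T := by
  intro α β
  obtain ⟨⟨u, u₀, hu⟩, ⟨v, v₀, hv⟩, ⟨w, w₀, hw⟩, huv, huw⟩ :=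
    h ⟨C α * X, by simp⟩ ⟨C β * X, by simp⟩
  rw [constantCoeff_apply] at hu hv hw
  refine ⟨u₀, v₀, w₀, ?_, ?_⟩
  · simpa [Algebra.smul_def, hu, hv, ← mul_assoc] using congrArg (fun p ↦ p.1.coeff 1) huv
  · simpa [Algebra.smul_def, hu, hw, ← mul_assoc] using congrArg (fun p ↦ p.1.coeff 1) huw

theorem IsAbsolutelyFlat.of_constantTermSubring
    (h : IsArithmeticalModule (constantTermSubring R T) (constantTermSubring R T)) :
    IsAbsolutelyFlat T := by
  intro t
  obtain ⟨⟨u, _⟩, ⟨v, _⟩, ⟨w, _⟩, huv, huw⟩ := h ⟨C t * X, by simp⟩ ⟨X ^ 2, by simp⟩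
  have h_ut : u.coeff 0 * t = 0 := by
    simpa [← mul_assoc, pow_succ] using congrArg (fun p ↦ p.1.coeff 1) huv
  have h_wt : 1 - u.coeff 0 = w.coeff 1 * t := by
    simpa [← mul_assoc, pow_succ] using congrArg (fun p ↦ p.1.coeff 2) huw
  exact ⟨w.coeff 1, by linear_combination h_ut + t * h_wt⟩

theorem IsAbsolutelyFlat.hasIdempotentSupports_constantTermSubring (hT : IsAbsolutelyFlat T)
    (h : IsArithmeticalModule R T) :
    HasIdempotentSupports (constantTermSubring R T) (constantTermSubring R T) := by
  intro f
  obtain ⟨e, he⟩ := hT.exists_isIdempotentSupport_C f.1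
  have he_idem : IsIdempotentElem e := C_injective (by simpa using he.isIdempotentElem.eq)
  have he_mem : C e ∈ constantTermSubring R T := by
    simpa using h.mem_range_algebraMap_of_isIdempotentElem he_idem
  exact ⟨⟨C e, he_mem⟩, .of_map (φ := (constantTermSubring R T).subtype)
    Subtype.val_injective he⟩

theorem IsAbsolutelyFlat.isArithmeticalModule_constantTermSubring (hT : IsAbsolutelyFlat T)
    (h : IsArithmeticalModule R T) :
    IsArithmeticalModule (constantTermSubring R T) (constantTermSubring R T) := by
  rintro ⟨f, hf⟩ ⟨g, hg⟩
  obtain ⟨d, f', g', rfl, rfl, h_coprime⟩ := hT.hasCoprimeCofactors f g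
  obtain ⟨y₀, z₀, h_one₀, hu, hv, hw⟩ := h.exists_bezout_mem_range (h_coprime.map constantCoeff)
  obtain ⟨y, z, h_one, rfl, rfl⟩ :=
    exists_lift_bezout_of_isCoprime constantCoeff_surjective h_coprime h_one₀
  rw [← map_mul] at hu hv hw
  refine ⟨⟨z * g', hu⟩, ⟨z * f', hv⟩, ⟨y * g', hw⟩, Subtype.ext ?_, Subtype.ext ?_⟩ <;>
    simp only [smul_eq_mul, Subring.coe_mul, AddSubgroupClass.coe_sub, Subring.coe_one]
  · ring
  · linear_combination -d * g' * h_one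

theorem isSemihereditary_constantTermSubring_iff :
    IsSemihereditary (constantTermSubring R T) ↔
      IsAbsolutelyFlat T ∧ IsArithmeticalModule R T := by
  rw [isSemihereditary_iff]
  exact ⟨fun h ↦ ⟨.of_constantTermSubring h.2, .of_constantTermSubring h.2⟩,
    fun ⟨hT, h⟩ ↦ ⟨hT.hasIdempotentSupports_constantTermSubring h,
      hT.isArithmeticalModule_constantTermSubring h⟩⟩

end ConstantTermSubring

section TotalQuotientRing

variable {R T : Type*} [CommRing R] [CommRing T] [Algebra R T]

theorem IsIdempotentSupport.add_one_sub_mem_nonZeroDivisors {e a : R}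
    (h : IsIdempotentSupport e a) : a + 1 - e ∈ nonZeroDivisors R := by
  have h_idem : e * e = e := h.isIdempotentElem
  obtain ⟨hea, he⟩ := h
  simp only [smul_eq_mul] at hea he
  rw [mem_nonZeroDivisors_iff_right]
  intro r hr
  have hra : r * a = 0 := by linear_combination e * hr - r * hea + r * h_idem
  linear_combination hr - hra + he r hra

theorem HasIdempotentSupports.isAbsolutelyFlat [IsFractionRing R T]
    (h : HasIdempotentSupports R R) : IsAbsolutelyFlat T := by
  intro t
  obtain ⟨a, b, rfl⟩ := IsLocalization.exists_mk'_eq (nonZeroDivisors R) t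
  obtain ⟨e, he⟩ := h a
  refine ⟨IsLocalization.mk' T (b : R) ⟨_, he.add_one_sub_mem_nonZeroDivisors⟩, ?_⟩
  rw [← IsLocalization.mk'_mul, ← IsLocalization.mk'_mul, IsLocalization.mk'_eq_iff_eq]
  congr 1
  simp only [Submonoid.coe_mul]
  linear_combination (-(b : R) * b) * he.1

theorem IsAbsolutelyFlat.isSemihereditary [FaithfulSMul R T] (hT : IsAbsolutelyFlat T)
    (h : IsArithmeticalModule R T) : IsSemihereditary R := by
  have h_inj : Function.Injective (algebraMap R T) := FaithfulSMul.algebraMap_injective R T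
  refine isSemihereditary_iff.2 ⟨fun a ↦ ?_, h.of_injective (f := Algebra.linearMap R T) h_inj⟩
  obtain ⟨u, hu⟩ := hT (algebraMap R T a)
  have h_supp := isIdempotentSupport_mul_of_eq_mul_mul hu
  obtain ⟨e, he⟩ := h.mem_range_algebraMap_of_isIdempotentElem h_supp.isIdempotentElem
  exact ⟨e, .of_map h_inj (he ▸ h_supp)⟩

variable (R T) in
theorem isSemihereditary_iff_of_isFractionRing [IsFractionRing R T] :
    IsSemihereditary R ↔ IsAbsolutelyFlat T ∧ IsArithmeticalModule R T := by
  have : FaithfulSMul R T := IsFractionRing.instFaithfulSMul R T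
  refine ⟨fun h ↦ ?_, fun h ↦ h.1.isSemihereditary h.2⟩
  obtain ⟨h_supp, h_arith⟩ := isSemihereditary_iff.1 h
  exact ⟨h_supp.isAbsolutelyFlat,
    h_arith.of_isLocalizedModule (nonZeroDivisors R) (Algebra.linearMap R T)⟩

variable (R T) in
theorem stmt9_general [IsFractionRing R T] :
    IsSemihereditary (constantTermSubring R T) ↔ IsSemihereditary R :=
  isSemihereditary_constantTermSubring_iff.trans
    (isSemihereditary_iff_of_isFractionRing R T).symm

end TotalQuotientRing

theorem stmt9 {R : Type*} [CommRing R] :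
    IsSemihereditary
        (Subring.comap
          (Polynomial.constantCoeff : Polynomial (FractionRing R) →+* FractionRing R)
          (algebraMap R (FractionRing R)).range) ↔
      (IsSemihereditary R ∧ ∀ t : FractionRing R, ∃ u : FractionRing R, t = t * t * u) :=
  (stmt9_general R (FractionRing R)).trans (and_iff_left_of_imp fun h ↦
    ((isSemihereditary_iff_of_isFractionRing R _).1 h).1).symm
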